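/- arXiv:2405.16633 — 7 statements merged into one kernel-verified Lean document; each statement's English description precedes it below -/
import Mathlib

section
/- For every real number q with 0 < q < 1, the quantity θ(q) = 2/(q(5 - q + √(9 - 10q + q²))) + 2/(q(1 - q + √(9 - 10q + q²))) satisfies θ(q) ≥ 2, with equality if and only if q = 2/3. -/
/-- For every real `q` with `0 < q < 1`, the quantity
`θ(q) = 2/(q(5 - q + √(9 - 10q + q²))) + 2/(q(1 - q + √(9 - 10q + q²)))`
satisfies `θ(q) ≥ 2`, with equality iff `q = 2/3`. -/
theorem theta_ge_two (q : ℝ) (hq0 : 0 < q) (hq1 : q < 1) :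
    2 ≤ 2 / (q * (5 - q + Real.sqrt (9 - 10*q + q^2)))
      + 2 / (q * (1 - q + Real.sqrt (9 - 10*q + q^2))) ∧
    (2 / (q * (5 - q + Real.sqrt (9 - 10*q + q^2)))
      + 2 / (q * (1 - q + Real.sqrt (9 - 10*q + q^2))) = 2 ↔ q = 2/3) := by
  have hrad : 0 < 9 - 10*q + q^2 := by nlinarith
  obtain ⟨s, hs⟩ : ∃ s, s = Real.sqrt (9 - 10*q + q^2) := ⟨_, rfl⟩
  have hs0 : 0 < s := hs ▸ Real.sqrt_pos.mpr hrad
  have hs2 : s^2 = 9 - 10*q + q^2 := by rw [hs]; exact Real.sq_sqrt hrad.le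
  rw [← hs]
  have hA : 0 < 5 - q + s := by linarith
  have hB : 0 < 1 - q + s := by linarith
  have hD : 0 < q * (5 - q + s) * (1 - q + s) := by positivity
  have key : 2 / (q * (5 - q + s)) + 2 / (q * (1 - q + s)) - 2
      = 4 * (s * (1 - 3*q + q^2) + (3 - 8*q + 8*q^2 - q^3))
        / (q * (5 - q + s) * (1 - q + s)) := by
    field_simp
    linear_combination (-2 * q) * hs2
  have hP : 0 < 3 - 8*q + 8*q^2 - q^3 := by
    nlinarith [mul_pos (pow_pos hq0 2) (sub_pos.mpr hq1), sq_nonneg (7*q - 4)]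
  have hprod : (3 - 8*q + 8*q^2 - q^3)^2 - (s * (1 - 3*q + q^2))^2 = 4*q*(3*q-2)^2 := by
    linear_combination (-(1 - 3*q + q^2)^2) * hs2
  have hnn : 0 ≤ 4*q*(3*q-2)^2 := by positivity
  have habs := abs_le_of_sq_le_sq' (show (s * (1 - 3*q + q^2))^2 ≤ _ by linarith) hP.le
  refine ⟨?_, ?_, ?_⟩
  · rw [← sub_nonneg, key]
    exact div_nonneg (by linarith [habs.1]) hD.le
  · intro h
    rw [h, sub_self, eq_comm, div_eq_zero_iff] at key
    rcases key with h0 | h0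
    · have h1 : s * (1 - 3*q + q^2) = -(3 - 8*q + 8*q^2 - q^3) := by linarith
      have h2 : 4*q*(3*q-2)^2 = 0 := by rw [← hprod, h1]; ring
      have h3 : (3*q-2)^2 = 0 := by
        rcases mul_eq_zero.mp h2 with h | h
        · linarith
        · exact h
      have h4 := pow_eq_zero_iff (two_ne_zero) |>.mp h3
      linarith
    · exact absurd h0 hD.ne'
  · intro h
    have h1 : s = 5/3 := by
      subst h
      nlinarith
    rw [h1, h]
    norm_num
end

section
/- Let b ≥ 2 be a real number and let q be a real number with b/(b+1) ≤ q < 1. Then F(1/2) = 1/2 - b(1-q)²/(b - 2q²) - 2(b-1)q²/b² > 0. (Note b - 2q² > 0 under these hypotheses, so the expression is well defined.) -/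
/-- For real `b ≥ 2` and `b/(b+1) ≤ q < 1`,
`F(1/2) = 1/2 - b(1-q)²/(b - 2q²) - 2(b-1)q²/b² > 0`. -/
theorem F_half_pos (b q : ℝ) (hb : 2 ≤ b) (hq1 : b / (b + 1) ≤ q) (hq2 : q < 1) :
    0 < 1/2 - b * (1 - q)^2 / (b - 2*q^2) - 2 * (b - 1) * q^2 / b^2 := by
  have hq3 : 2/3 ≤ q := by
    refine le_trans ?_ hq1
    rw [div_le_div_iff₀ (by norm_num) (by linarith)]
    linarith
  have hd : 0 < b - 2*q^2 := by nlinarith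
  have key : 0 < b^2*(b-2*q^2) - 2*b^3*(1-q)^2 - 4*(b-1)*q^2*(b-2*q^2) := by
    obtain ⟨c, rfl⟩ : ∃ c, b = c + 2 := ⟨b - 2, by ring⟩
    obtain ⟨s, rfl⟩ : ∃ s, q = 1 - s := ⟨1 - q, by ring⟩
    have hc : 0 ≤ c := by linarith
    have hs : 0 < s := by linarith
    have hs3 : s ≤ 1/3 := by linarith
    have h2 : s^2 ≤ 1/9 := by nlinarith
    have e1 : 0 ≤ c^3*(1-2*s^2) := mul_nonneg (by positivity) (by linarith)
    have e2 : 0 ≤ c^2*s*(12-18*s) := mul_nonneg (by positivity) (by linarith)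
    have e3 : 0 ≤ c*s*(8-32*s^2) := mul_nonneg (by positivity) (by linarith)
    have e4 : 0 < s^2*(16-32*s) := mul_pos (by positivity) (by linarith)
    have e5 : 0 ≤ 4*c*s^2 + 8*(c+1)*s^4 := by positivity
    linarith
  have hb0 : 0 < b := by linarith
  have : 1/2 - b * (1 - q)^2 / (b - 2*q^2) - 2 * (b - 1) * q^2 / b^2
      = (b^2*(b-2*q^2) - 2*b^3*(1-q)^2 - 4*(b-1)*q^2*(b-2*q^2)) / (2*b^2*(b-2*q^2)) := by
    have := hd.ne'
    field_simp
    ring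
  rw [this]
  positivity
end

section
/- Fix a real number q with 0 < q < 1. The function b ↦ 1/2 - b(1-q)²/(b - 2q²) - 2(b-1)q²/b² is strictly increasing on the interval [2, ∞) of real numbers b. (For b ≥ 2 and q < 1 one has b - 2q² > 0, so the function is well defined there.) -/
/-- Fix `0 < q < 1`. The function `b ↦ 1/2 - b(1-q)²/(b - 2q²) - 2(b-1)q²/b²`
is strictly increasing on `[2, ∞)`. -/
theorem F_half_strictMonoOn (q : ℝ) (hq0 : 0 < q) (hq1 : q < 1) :
    StrictMonoOn (fun b : ℝ => 1/2 - b * (1 - q)^2 / (b - 2*q^2) - 2 * (b - 1) * q^2 / b^2)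
      (Set.Ici (2 : ℝ)) := by
  intro x hx y hy hxy
  simp only [Set.mem_Ici] at hx hy
  have hq2 : q^2 < 1 := by nlinarith
  have hq3 : 0 < q^2 := by positivity
  have h1q : 0 < (1 - q)^2 := pow_pos (by linarith) 2
  have hX : 0 < x - 2*q^2 := by linarith
  have hY : 0 < y - 2*q^2 := by linarith
  have h1 : y * (1 - q)^2 / (y - 2*q^2) < x * (1 - q)^2 / (x - 2*q^2) := by
    rw [div_lt_div_iff₀ hY hX]
    have h : 0 < (1 - q)^2 * (2 * q^2 * (y - x)) :=
      mul_pos h1q (mul_pos (by linarith) (by linarith))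
    linarith
  have h2 : 2 * (y - 1) * q^2 / y^2 ≤ 2 * (x - 1) * q^2 / x^2 := by
    rw [div_le_div_iff₀ (by positivity) (by positivity)]
    have h3 : 0 ≤ x * y - x - y := by nlinarith
    have h : 0 ≤ 2 * q^2 * ((y - x) * (x * y - x - y)) :=
      mul_nonneg (by linarith) (mul_nonneg (by linarith) h3)
    linarith
  show 1/2 - x * (1 - q)^2 / (x - 2*q^2) - 2 * (x - 1) * q^2 / x^2
    < 1/2 - y * (1 - q)^2 / (y - 2*q^2) - 2 * (y - 1) * q^2 / y^2
  linarith
end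

section
/- Let 0 < q < 1, set w = w⁺ = (q/4)(3 - q + √(9 - 10q + q²)), z = 1 - w, and f = z + q²/(4(1 - z)). Then f < 1 and 1/(1 - f) = θ(q), where θ(q) = 2/(q(5 - q + √(9 - 10q + q²))) + 2/(q(1 - q + √(9 - 10q + q²))). -/
/-- For `0 < q < 1`, with `w = w⁺ = (q/4)(3 - q + √(9 - 10q + q²))`, `z = 1 - w`
and `f = z + q²/(4(1 - z))`, we have `f < 1` and `1/(1 - f) = θ(q)`. -/
theorem return_prob_theta (q : ℝ) (hq0 : 0 < q) (hq1 : q < 1) :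
    (1 - (q/4) * (3 - q + Real.sqrt (9 - 10*q + q^2)))
      + q^2 / (4 * (1 - (1 - (q/4) * (3 - q + Real.sqrt (9 - 10*q + q^2))))) < 1 ∧
    1 / (1 - ((1 - (q/4) * (3 - q + Real.sqrt (9 - 10*q + q^2)))
        + q^2 / (4 * (1 - (1 - (q/4) * (3 - q + Real.sqrt (9 - 10*q + q^2)))))))
      = 2 / (q * (5 - q + Real.sqrt (9 - 10*q + q^2)))
        + 2 / (q * (1 - q + Real.sqrt (9 - 10*q + q^2))) := by
  have hs : 0 ≤ Real.sqrt (9 - 10*q + q^2) := Real.sqrt_nonneg _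
  generalize Real.sqrt (9 - 10*q + q^2) = s at hs ⊢
  obtain ⟨A, hA⟩ : ∃ A, A = 3 - q + s := ⟨_, rfl⟩
  have h5 : 5 - q + s = A + 2 := by rw [hA]; ring
  have h1 : 1 - q + s = A - 2 := by rw [hA]; ring
  rw [h5, h1, ← hA]
  have hA2 : 0 < A - 2 := by linarith
  have hA0 : 0 < A := by linarith
  have hAp : 0 < A + 2 := by linarith
  have hf : (1 - (q/4) * A) + q^2 / (4 * (1 - (1 - (q/4) * A)))
      = 1 - q * ((A - 2) * (A + 2)) / (4 * A) := by
    have e : 4 * (1 - (1 - (q/4) * A)) = q * A := by ring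
    rw [e]
    field_simp
    ring
  rw [hf]
  constructor
  · have : 0 < q * ((A - 2) * (A + 2)) / (4 * A) := by positivity
    linarith
  · rw [sub_sub_cancel]
    field_simp
    ring
end

section
/- Let b ≥ 2 be a real number and let q satisfy b/(b+1) ≤ q < 1. Then 1/2 < 1 - q²/b, and the function F(z) = z - (1-q)²(1-z)/(1 - q²/b - z) - (b-1)q²/(b²(1-z)) has exactly two zeros in the interval [0, 1 - q²/b): exactly one zero in the open interval (0, 1/2) and exactly one zero in the open interval (1/2, 1 - q²/b). -/
lemma cubic_factor (c A B x y w z : ℝ) (hxy : x ≠ y) (hxw : x ≠ w) (hyw : y ≠ w)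
    (hx : x * (c - x) * (1 - x) - A * (1 - x)^2 - B * (c - x) = 0)
    (hy : y * (c - y) * (1 - y) - A * (1 - y)^2 - B * (c - y) = 0)
    (hw : w * (c - w) * (1 - w) - A * (1 - w)^2 - B * (c - w) = 0)
    (hz : z * (c - z) * (1 - z) - A * (1 - z)^2 - B * (c - z) = 0) :
    z = x ∨ z = y ∨ z = w := by
  by_contra! h
  obtain ⟨h1, h2, h3⟩ := h
  have e1 : ∀ s t : ℝ, s ≠ t → s * (c - s) * (1 - s) - A * (1 - s)^2 - B * (c - s) = 0 →
      t * (c - t) * (1 - t) - A * (1 - t)^2 - B * (c - t) = 0 →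
      s^2 + s*t + t^2 - (1 + c + A) * (s + t) + (c + 2*A + B) = 0 := by
    intro s t hst hs ht
    apply mul_left_cancel₀ (sub_ne_zero.mpr hst)
    linear_combination hs - ht
  have e2 : ∀ s t u : ℝ, t ≠ u →
      s^2 + s*t + t^2 - (1 + c + A) * (s + t) + (c + 2*A + B) = 0 →
      s^2 + s*u + u^2 - (1 + c + A) * (s + u) + (c + 2*A + B) = 0 →
      s + t + u - (1 + c + A) = 0 := by
    intro s t u htu h h'
    apply mul_left_cancel₀ (sub_ne_zero.mpr htu)
    linear_combination h - h'
  have a := e2 x y w hyw (e1 x y hxy hx hy) (e1 x w hxw hx hw)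
  have a' := e2 x y z h2.symm (e1 x y hxy hx hy) (e1 x z h1.symm hx hz)
  apply h3
  linarith

/-- For real `b ≥ 2` and `b/(b+1) ≤ q < 1`: `1/2 < 1 - q²/b`, and
`F(z) = z - (1-q)²(1-z)/(1 - q²/b - z) - (b-1)q²/(b²(1-z))` has exactly two
zeros in `[0, 1 - q²/b)`: exactly one in `(0, 1/2)` and exactly one in
`(1/2, 1 - q²/b)`. -/
theorem F_two_roots (b q : ℝ) (hb : 2 ≤ b) (hq1 : b / (b + 1) ≤ q) (hq2 : q < 1) :
    (1/2 : ℝ) < 1 - q^2/b ∧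
    (∃! z : ℝ, z ∈ Set.Ioo (0:ℝ) (1/2) ∧
      z - (1 - q)^2 * (1 - z) / (1 - q^2/b - z) - (b - 1) * q^2 / (b^2 * (1 - z)) = 0) ∧
    (∃! z : ℝ, z ∈ Set.Ioo (1/2 : ℝ) (1 - q^2/b) ∧
      z - (1 - q)^2 * (1 - z) / (1 - q^2/b - z) - (b - 1) * q^2 / (b^2 * (1 - z)) = 0) ∧
    ({z : ℝ | z ∈ Set.Ico (0:ℝ) (1 - q^2/b) ∧
      z - (1 - q)^2 * (1 - z) / (1 - q^2/b - z) - (b - 1) * q^2 / (b^2 * (1 - z)) = 0}.ncard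
        = 2) := by
  have hb0 : 0 < b := by linarith
  have hq : 2/3 ≤ q := by
    refine le_trans ?_ hq1
    rw [div_le_div_iff₀ (by norm_num) (by linarith)]
    linarith
  have hqq : q^2 < 1 := by nlinarith
  have ht : q^2 / b ≤ q^2 / 2 := div_le_div_of_nonneg_left (by positivity) (by norm_num) hb
  have htp : 0 < q^2 / b := by positivity
  obtain ⟨B, hB⟩ : ∃ B, B = (b - 1) * q^2 / b^2 := ⟨_, rfl⟩
  have hB0 : 0 < B := by
    rw [hB]
    have : 0 < b - 1 := by linarith
    positivity
  have hB1 : B ≤ q^2 / 4 := by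
    rw [hB, div_le_div_iff₀ (by positivity) (by norm_num)]
    nlinarith [mul_nonneg (sq_nonneg q) (sq_nonneg (b - 2))]
  obtain ⟨c, hc⟩ : ∃ c, c = 1 - q^2 / b := ⟨_, rfl⟩
  have hc1 : c < 1 := by linarith
  have hc2 : 1/2 < c := by linarith
  obtain ⟨A, hA⟩ : ∃ A, A = (1 - q)^2 := ⟨_, rfl⟩
  have hA0 : 0 < A := by
    rw [hA]
    have : 0 < 1 - q := by linarith
    positivity
  have key : ∀ z : ℝ, z < c →
      (z - (1 - q)^2 * (1 - z) / (1 - q^2/b - z) - (b - 1) * q^2 / (b^2 * (1 - z)) = 0 ↔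
        z * (c - z) * (1 - z) - A * (1 - z)^2 - B * (c - z) = 0) := by
    intro z hz
    rw [← hc, ← hA, ← div_div, ← hB]
    have h1 : c - z ≠ 0 := by intro h; linarith
    have h2 : 1 - z ≠ 0 := by intro h; linarith
    have e : z * (c - z) * (1 - z) - A * (1 - z)^2 - B * (c - z) =
        (z - A * (1 - z) / (c - z) - B / (1 - z)) * ((c - z) * (1 - z)) := by
      field_simp
    rw [e]
    simp [h1, h2]
  have hcont : Continuous
      (fun z : ℝ => z * (c - z) * (1 - z) - A * (1 - z)^2 - B * (c - z)) := by fun_prop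
  have p0 : (0:ℝ) * (c - 0) * (1 - 0) - A * (1 - 0)^2 - B * (c - 0) < 0 := by nlinarith
  have ph : 0 < (1/2:ℝ) * (c - 1/2) * (1 - 1/2) - A * (1 - 1/2)^2 - B * (c - 1/2) := by
    have h1 : (1 - q^2)/2 ≤ c - 1/2 := by linarith
    have h2 : (1 - q^2)/4 ≤ 1/4 - B := by linarith
    have h3 : (1 - q^2)/2 * ((1 - q^2)/4) ≤ (c - 1/2) * (1/4 - B) :=
      mul_le_mul h1 h2 (by linarith) (by linarith)
    have h4 : 0 < A * ((1 + q)^2 - 2) := mul_pos hA0 (by nlinarith)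
    have h5 : A * (1 + q)^2 = (1 - q^2)^2 := by rw [hA]; ring
    nlinarith
  have pc : c * (c - c) * (1 - c) - A * (1 - c)^2 - B * (c - c) < 0 := by
    have : 0 < 1 - c := by linarith
    have : 0 < A * (1 - c)^2 := by positivity
    linarith
  have p1 : 0 < (1:ℝ) * (c - 1) * (1 - 1) - A * (1 - 1)^2 - B * (c - 1) := by nlinarith
  obtain ⟨x, ⟨hx0, hx1⟩, hx⟩ := intermediate_value_Ioo (by norm_num : (0:ℝ) ≤ 1/2)
    hcont.continuousOn ⟨p0, ph⟩
  obtain ⟨y, ⟨hy0, hy1⟩, hy⟩ := intermediate_value_Ioo' hc2.le hcont.continuousOn ⟨pc, ph⟩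
  obtain ⟨w, ⟨hw0, hw1⟩, hw⟩ := intermediate_value_Ioo hc1.le hcont.continuousOn ⟨pc, p1⟩
  simp only at hx hy hw
  have hxy : x ≠ y := by intro h; linarith
  have hroots := fun z => cubic_factor c A B x y w z hxy (by intro h; linarith) (by intro h; linarith) hx hy hw
  have fx := (key x (by linarith)).2 hx
  have fy := (key y hy1).2 hy
  refine ⟨by linarith, ⟨x, ⟨⟨hx0, hx1⟩, fx⟩, ?_⟩, ⟨y, ⟨⟨hy0, by linarith⟩, fy⟩, ?_⟩, ?_⟩
  · rintro z ⟨⟨hz0, hz1⟩, hz⟩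
    rcases hroots z ((key z (by linarith)).1 hz) with h | h | h
    · exact h
    · linarith
    · linarith
  · rintro z ⟨⟨hz0, hz1⟩, hz⟩
    rcases hroots z ((key z (by linarith)).1 hz) with h | h | h
    · linarith
    · exact h
    · linarith
  · refine Eq.trans ?_ (Set.ncard_pair hxy)
    congr 1
    ext z
    simp only [Set.mem_ofPred_eq, Set.mem_insert_iff, Set.mem_singleton_iff]
    constructor
    · rintro ⟨⟨hz0, hz1⟩, hz⟩
      rcases hroots z ((key z (by linarith)).1 hz) with h | h | h
      · exact Or.inl h
      · exact Or.inr h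
      · linarith
    · rintro (h | h)
      · rw [h]
        exact ⟨⟨hx0.le, by linarith⟩, fx⟩
      · rw [h]
        exact ⟨⟨by linarith, by linarith⟩, fy⟩
end

section
/- Let b ≥ 2 be a real number and 0 < q < 1. Then F is strictly decreasing on the open interval (1 - q²/b, 1), where F(z) = z - (1-q)²(1-z)/(1 - q²/b - z) - (b-1)q²/(b²(1-z)). Consequently F has at most one zero in (1 - q²/b, 1). -/
/-- For real `b ≥ 2` and `0 < q < 1`,
`F(z) = z - (1-q)²(1-z)/(1 - q²/b - z) - (b-1)q²/(b²(1-z))` is strictly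
decreasing on `(1 - q²/b, 1)`; consequently it has at most one zero there. -/
theorem F_strictAnti_upper (b q : ℝ) (hb : 2 ≤ b) (hq0 : 0 < q) (hq1 : q < 1) :
    StrictAntiOn
      (fun z : ℝ => z - (1 - q)^2 * (1 - z) / (1 - q^2/b - z)
        - (b - 1) * q^2 / (b^2 * (1 - z)))
      (Set.Ioo (1 - q^2/b) 1) ∧
    {z : ℝ | z ∈ Set.Ioo (1 - q^2/b) 1 ∧
      z - (1 - q)^2 * (1 - z) / (1 - q^2/b - z) - (b - 1) * q^2 / (b^2 * (1 - z)) = 0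
      }.Subsingleton := by
  have hanti : StrictAntiOn
      (fun z : ℝ => z - (1 - q)^2 * (1 - z) / (1 - q^2/b - z)
        - (b - 1) * q^2 / (b^2 * (1 - z)))
      (Set.Ioo (1 - q^2/b) 1) := by
    rintro x ⟨hx1, hx2⟩ y ⟨hy1, hy2⟩ hxy
    have hb0 : 0 < b := by linarith
    have hc : 0 < q^2/b := by positivity
    have hq2 : q^2 < 1 := by nlinarith
    have hK : (b - 1) * q^2 / b^2 > (q^2/b)^2 := by
      rw [div_pow, gt_iff_lt]
      apply div_lt_div_of_pos_right _ (by positivity)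
      have : 0 < q^2 := by positivity
      nlinarith
    have e : ∀ z : ℝ, (b - 1) * q^2 / (b^2 * (1 - z)) = (b - 1) * q^2 / b^2 / (1 - z) := by
      intro z
      rw [div_div]
    simp only [e]
    generalize (b - 1) * q^2 / b^2 = K at *
    generalize q^2/b = c at *
    have hu : 0 < 1 - x := by linarith
    have hv : 0 < 1 - y := by linarith
    have h1 : (1 - q)^2 * (1 - x) / (1 - c - x) ≤ (1 - q)^2 * (1 - y) / (1 - c - y) := by
      rw [← neg_le_neg_iff, ← div_neg, ← div_neg,
        div_le_div_iff₀ (by linarith) (by linarith)]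
      have : 0 ≤ (1 - q)^2 * (c * (y - x)) :=
        mul_nonneg (sq_nonneg _) (mul_nonneg hc.le (by linarith))
      nlinarith
    have h2 : y - x < K / (1 - y) - K / (1 - x) := by
      rw [div_sub_div _ _ hv.ne' hu.ne', lt_div_iff₀ (mul_pos hv hu)]
      have h3 : (1 - y) * (1 - x) < K := by nlinarith
      nlinarith
    show y - (1 - q)^2 * (1 - y) / (1 - c - y) - K / (1 - y)
      < x - (1 - q)^2 * (1 - x) / (1 - c - x) - K / (1 - x)
    linarith
  refine ⟨hanti, ?_⟩
  rintro x ⟨hx, hx0⟩ y ⟨hy, hy0⟩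
  exact hanti.injOn hx hy (hx0.trans hy0.symm)
end

section
/- Let 2/3 ≤ q < 1 and b = 2. Set z* = 1 - w⁺ where w⁺ = (q/4)(3 - q + √(9 - 10q + q²)). Then 0 < z* < 1 - q²/2, F(z*) = 0, and F(z) ≠ 0 for every z ∈ [0, z*). That is, z* is the smallest root of F in [0,1], where F(z) = z - (1-q)²(1-z)/(1 - q²/2 - z) - q²/(4(1-z)). -/
/-- For `2/3 ≤ q < 1` and `b = 2`, with `z* = 1 - w⁺` where
`w⁺ = (q/4)(3 - q + √(9 - 10q + q²))`: `0 < z* < 1 - q²/2`, `F(z*) = 0`, and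
`F(z) ≠ 0` for `z ∈ [0, z*)`; i.e. `z*` is the smallest root of
`F(z) = z - (1-q)²(1-z)/(1 - q²/2 - z) - q²/(4(1-z))` in `[0,1]`. -/
theorem smallest_root (q : ℝ) (hq0 : 2/3 ≤ q) (hq1 : q < 1) :
    let zstar : ℝ := 1 - (q/4) * (3 - q + Real.sqrt (9 - 10*q + q^2))
    let F : ℝ → ℝ := fun z =>
      z - (1 - q)^2 * (1 - z) / (1 - q^2/2 - z) - q^2 / (4 * (1 - z))
    0 < zstar ∧ zstar < 1 - q^2/2 ∧ F zstar = 0 ∧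
      ∀ z ∈ Set.Ico (0:ℝ) zstar, F z ≠ 0 := by
  intro zstar F
  set s := Real.sqrt (9 - 10*q + q^2) with hs
  have hpos : 0 < 9 - 10*q + q^2 := by nlinarith
  have s0 : 0 < s := Real.sqrt_pos.mpr hpos
  have s2 : s^2 = 9 - 10*q + q^2 := Real.sq_sqrt hpos.le
  have q0 : 0 < q := by linarith
  have key : ∀ z : ℝ, 1 - z ≠ 0 → 1 - q^2/2 - z ≠ 0 →
      F z * (4 * (1 - z) * (1 - q^2/2 - z)) =
        -((4*(1-z) - 2*q) * ((1-z) - (q/4) * (3 - q + s)) * ((1-z) - (q/4) * (3 - q - s))) := by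
    intro z h1 h2
    have e : F z * (4 * (1 - z) * (1 - q^2/2 - z)) =
        z * (4 * (1 - z) * (1 - q^2/2 - z)) - 4 * (1-q)^2 * (1-z)^2
          - q^2 * (1 - q^2/2 - z) := by
      have e1 : (1 - q)^2 * (1 - z) / (1 - q^2/2 - z) * (1 - q^2/2 - z) = (1 - q)^2 * (1 - z) :=
        div_mul_cancel₀ _ h2
      have e2 : q^2 / (4 * (1 - z)) * (4 * (1 - z)) = q^2 :=
        div_mul_cancel₀ _ (by simpa using h1)
      simp only [F]
      linear_combination (-(4 * (1 - z))) * e1 - (1 - q^2/2 - z) * e2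
    rw [e]
    linear_combination (-(4*(1-z) - 2*q) * q^2/16) * s2
  have hz0 : 0 < zstar := by
    have : q * s < 4 - 3*q + q^2 := by
      apply lt_of_pow_lt_pow_left₀ 2 (by nlinarith)
      rw [mul_pow, s2]
      nlinarith [mul_nonneg q0.le (sq_nonneg (q - 9/10)), sq_nonneg (q - 9/10)]
    simp only [zstar]
    nlinarith
  have hz1 : zstar < 1 - q^2/2 := by
    simp only [zstar]
    nlinarith [mul_pos q0 s0, mul_pos q0 (sub_pos.mpr hq1)]
  refine ⟨hz0, hz1, ?_, ?_⟩
  · have h1 : 1 - zstar ≠ 0 := by nlinarith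
    have h2 : 1 - q^2/2 - zstar ≠ 0 := by linarith
    have h := key zstar h1 h2
    have h3 : (1 - zstar) - (q/4) * (3 - q + s) = 0 := by simp only [zstar]; ring
    rw [h3] at h
    have h4 : 4 * (1 - zstar) * (1 - q^2/2 - zstar) ≠ 0 :=
      mul_ne_zero (mul_ne_zero (by norm_num) h1) h2
    have h5 : F zstar * (4 * (1 - zstar) * (1 - q^2/2 - zstar)) = 0 := by rw [h]; ring
    exact (mul_eq_zero.mp h5).resolve_right h4
  · rintro z ⟨_, hz⟩ hF
    have h1 : 1 - z ≠ 0 := by nlinarith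
    have h2 : 1 - q^2/2 - z ≠ 0 := by linarith
    have h := key z h1 h2
    rw [hF, zero_mul] at h
    have a2 : 0 < (1-z) - (q/4) * (3 - q + s) := by simp only [zstar] at hz; linarith
    have qs := mul_pos q0 s0
    have qq := mul_pos q0 (sub_pos.mpr hq1)
    have a1 : 0 < 4*(1-z) - 2*q := by nlinarith
    have a3 : 0 < (1-z) - (q/4) * (3 - q - s) := by nlinarith
    have := mul_pos (mul_pos a1 a2) a3
    linarith
end
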